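/- Let q be a prime power, let n be a positive divisor of q²−1, set n₂ = n/gcd(n, q+1), let t be an integer with 1 ≤ t ≤ (q−1)/n₂ − 1, set N = (t+1)n + 1, and let k be an integer with 1 ≤ k ≤ ⌊(N+q−1)/(q+1)⌋. (a) There exists an MDS Hermitian self-orthogonal [N, k]_{q²} code, whose Hermitian dual has minimum distance k+1. (b) If k(q+1) = N−1, there exists an MDS Hermitian self-orthogonal [N+1, k+1]_{q²} code, whose Hermitian dual has minimum distance k+2. (c) If N−1+q ≠ k(q+1) ≠ N−1, there exist n' ∈ {N, N+1} and an MDS Hermitian self-orthogonal [n', k+1]_{q²} code, whose Hermitian dual has minimum distance k+2. -/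

import Mathlib

open scoped BigOperators

/-- A linear code `C ⊆ 𝔽_{q²}ⁿ` is Hermitian self-orthogonal if
`⟨c,c'⟩_H = ∑ i, c i * (c' i)^q = 0` for all codewords `c, c'`. -/
def IsHermSelfOrth (q : ℕ) {F : Type*} [Field F] {n : ℕ}
    (C : Submodule F (Fin n → F)) : Prop :=
  ∀ c ∈ C, ∀ c' ∈ C, ∑ i, c i * (c' i) ^ q = 0

/-- The minimum Hamming distance of the code `C` equals `d`. -/
def MinDistEq {F : Type*} [Field F] {n : ℕ}
    (C : Submodule F (Fin n → F)) (d : ℕ) : Prop :=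
  (∀ c ∈ C, c ≠ 0 → d ≤ Set.ncard {i | c i ≠ 0}) ∧
  (∃ c ∈ C, c ≠ 0 ∧ Set.ncard {i | c i ≠ 0} = d)

/-- The Hermitian dual `C^{⊥_H} = {x : ⟨x,c⟩_H = 0 for all c ∈ C}` of a code. -/
def hermDual (q : ℕ) {F : Type*} [Field F] {n : ℕ}
    (C : Submodule F (Fin n → F)) : Submodule F (Fin n → F) where
  carrier := {x | ∀ c ∈ C, ∑ i, x i * (c i) ^ q = 0}
  add_mem' := by
    intro a b ha hb c hc
    have h1 := ha c hc
    have h2 := hb c hc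
    calc ∑ i, (a + b) i * c i ^ q
        = ∑ i, (a i * c i ^ q + b i * c i ^ q) := by
          simp [add_mul]
      _ = 0 := by rw [Finset.sum_add_distrib, h1, h2, add_zero]
  zero_mem' := by intro c hc; simp
  smul_mem' := by
    intro r x hx c hc
    have h := hx c hc
    calc ∑ i, (r • x) i * c i ^ q = r * ∑ i, x i * c i ^ q := by
          simp [Finset.mul_sum, mul_assoc]
      _ = 0 := by rw [h, mul_zero]

/-!
The codes are generalized Reed–Solomon codes at nodes `a` whose barycentric weights lie in the
subfield with `q` elements. Such weights are norms `v ^ (q + 1)`; with the `v` as multipliers, the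
Hermitian product of the codewords of `X ^ i` and `X ^ j` is the weighted power sum of the nodes of
exponent `i + q * j`, a leading coefficient in Lagrange interpolation, which vanishes for exponents
below `N - 1`. Conjugation swaps `i` and `j`, so one dimension further up only the self-product of
`X ^ k` can survive; being fixed by conjugation, it is minus a norm and can be cancelled by a
coordinate at infinity.

For the nodes, put `r = (q - 1) / (n / gcd n (q + 1))` and let `Q` be a divisor of `X ^ r - 1`. The
roots of `X * Q (X ^ n)` are distinct elements of the field because `n * r` divides `q ^ 2 - 1`. The
derivative of this polynomial is again a polynomial in `X ^ n` with coefficients in the subfield,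
where `X ^ n` also takes its values at the nodes.
-/

open Finset Polynomial

section HermitianDual

variable {F : Type*} [Field F] {q n : ℕ} {σ : F →+* F}

theorem mem_hermDual_span (hσ : ∀ x, σ x = x ^ q) {s : Set (Fin n → F)} {x : Fin n → F}
    (hx : ∀ y ∈ s, ∑ i, x i * y i ^ q = 0) : x ∈ hermDual q (Submodule.span F s) := by
  simp only [← hσ] at hx
  intro y hy
  simp only [← hσ]
  induction hy using Submodule.span_induction with
  | mem y hy => exact hx y hy
  | zero => simp
  | add y z _ _ hy hz => simp [mul_add, sum_add_distrib, hy, hz]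
  | smul r y _ hy => simp [mul_left_comm _ (σ r), ← mul_sum, hy]

theorem isHermSelfOrth_span (hσ : ∀ x, σ x = x ^ q) {s : Set (Fin n → F)}
    (hs : ∀ x ∈ s, ∀ y ∈ s, ∑ i, x i * y i ^ q = 0) :
    IsHermSelfOrth q (Submodule.span F s) := by
  have hle : Submodule.span F s ≤ hermDual q (Submodule.span F s) :=
    Submodule.span_le.2 fun x hx => mem_hermDual_span hσ (hs x hx)
  exact fun x hx => hle hx

theorem isHermSelfOrth_map_degreeLT (hσ : ∀ x, σ x = x ^ q) {K : ℕ} (φ : F[X] →ₗ[F] (Fin n → F))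
    (h : ∀ i < K, ∀ j < K, ∑ l, φ (X ^ i) l * φ (X ^ j) l ^ q = 0) :
    IsHermSelfOrth q ((degreeLT F K).map φ) := by
  classical
  rw [degreeLT_eq_span_X_pow, Submodule.map_span]
  apply isHermSelfOrth_span hσ
  simpa using h

end HermitianDual

section MDS

variable {F : Type*} [Field F]

/-- A `K`-dimensional code in which any `K` coordinates form an information set. This is the
coordinate form of the MDS property; see `IsMDS.minDistEq` for the distance. -/
structure IsMDS {ι : Type*} (C : Submodule F (ι → F)) (K : ℕ) : Prop where
  finrank_eq : Module.finrank F C = K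
  eq_zero_of_eqOn_zero : ∀ c ∈ C, ∀ T : Finset ι, #T = K → (∀ i ∈ T, c i = 0) → c = 0

theorem IsMDS.exists_eq_one {ι : Type*} [Finite ι] {K : ℕ} {C : Submodule F (ι → F)}
    (hC : IsMDS C K) {T : Finset ι} (hT : #T = K) {i : ι} (hi : i ∈ T) :
    ∃ c ∈ C, c i = 1 ∧ ∀ j ∈ T, j ≠ i → c j = 0 := by
  classical
  let restrict : C →ₗ[F] (T → F) := LinearMap.funLeft F F Subtype.val ∘ₗ C.subtype
  have hinj : Function.Injective restrict := by
    rw [← LinearMap.ker_eq_bot, LinearMap.ker_eq_bot']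
    intro c hc
    exact Subtype.ext <| hC.eq_zero_of_eqOn_zero c c.2 T hT fun j hj => congrFun hc ⟨j, hj⟩
  have hdim : Module.finrank F C = Module.finrank F (T → F) := by simp [hC.finrank_eq, hT]
  have hsurj := (LinearMap.injective_iff_surjective_of_finrank_eq_finrank hdim).1 hinj
  obtain ⟨c, hc⟩ := hsurj (Pi.single ⟨i, hi⟩ 1)
  refine ⟨c, c.2, ?_, fun j hj hji => ?_⟩
  · simpa [restrict] using congrFun hc ⟨i, hi⟩
  · simpa [restrict, hji] using congrFun hc ⟨j, hj⟩

theorem ncard_ne_zero_add_card_le {ι : Type*} [Fintype ι] {c : ι → F} {T : Finset ι}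
    (hc : ∀ i ∈ T, c i = 0) : {i | c i ≠ 0}.ncard + #T ≤ Fintype.card ι := by
  have hsub : {i | c i ≠ 0} ⊆ (T : Set ι)ᶜ := fun i hi hiT => hi (hc i hiT)
  have hcompl := Set.ncard_add_ncard_compl (T : Set ι)
  rw [Set.ncard_coe_finset, Nat.card_eq_fintype_card] at hcompl
  have := Set.ncard_le_ncard hsub
  omega

theorem IsMDS.card_lt_ncard_ne_zero_add {ι : Type*} [Fintype ι] {K : ℕ} {C : Submodule F (ι → F)}
    (hC : IsMDS C K) {c : ι → F} (hc : c ∈ C) (hc0 : c ≠ 0) :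
    Fintype.card ι < {i | c i ≠ 0}.ncard + K := by
  classical
  have hcompl := Set.ncard_add_ncard_compl {i | c i ≠ 0}
  rw [Nat.card_eq_fintype_card] at hcompl
  by_contra! hle
  have hK : K ≤ #{i | c i ≠ 0}ᶜ.toFinset := by
    rw [← Set.ncard_eq_toFinset_card']
    omega
  obtain ⟨T, hTsub, hT⟩ := exists_subset_card_eq hK
  exact hc0 <| hC.eq_zero_of_eqOn_zero c hc T hT fun i hi => by simpa using hTsub hi

theorem IsMDS.minDistEq {n K : ℕ} {C : Submodule F (Fin n → F)} (hC : IsMDS C K) (hK : 0 < K) :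
    MinDistEq C (n - K + 1) := by
  classical
  have hKn : K ≤ n := by simpa [hC.finrank_eq] using Submodule.finrank_le C
  have hlower : ∀ c ∈ C, c ≠ 0 → n - K + 1 ≤ {i | c i ≠ 0}.ncard := by
    intro c hc hc0
    have := hC.card_lt_ncard_ne_zero_add hc hc0
    rw [Fintype.card_fin] at this
    omega
  obtain ⟨T, -, hT⟩ := exists_subset_card_eq (s := (univ : Finset (Fin n))) (by simpa using hKn)
  obtain ⟨i, hi⟩ := card_pos.1 (hT ▸ hK)
  obtain ⟨c, hc, hci, hcT⟩ := hC.exists_eq_one hT hi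
  have hc0 : c ≠ 0 := fun h => by simp [h] at hci
  have hupper := ncard_ne_zero_add_card_le (T := T.erase i) fun j hj =>
    hcT j (mem_of_mem_erase hj) (ne_of_mem_erase hj)
  rw [card_erase_of_mem hi, hT, Fintype.card_fin] at hupper
  have := hlower c hc hc0
  exact ⟨hlower, c, hc, hc0, by omega⟩

variable {q n K : ℕ} {σ : F →+* F} {C : Submodule F (Fin n → F)}

theorem IsMDS.lt_ncard_ne_zero_of_mem_hermDual (hC : IsMDS C K) (hσ : ∀ x, σ x = x ^ q)
    (hKn : K ≤ n) {x : Fin n → F} (hx : x ∈ hermDual q C) (hx0 : x ≠ 0) :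
    K < {i | x i ≠ 0}.ncard := by
  classical
  by_contra! hle
  rw [Set.ncard_eq_toFinset_card'] at hle
  obtain ⟨T, hsupp, hT⟩ := exists_superset_card_eq hle (by simpa using hKn)
  have hxT : ∀ j, x j ≠ 0 → j ∈ T := fun j hj => hsupp (by simpa using hj)
  obtain ⟨i, hi⟩ := Function.ne_iff.1 hx0
  obtain ⟨c, hc, hci, hcT⟩ := hC.exists_eq_one hT (hxT i hi)
  have hsum : ∑ j, x j * σ (c j) = x i * σ (c i) := by
    refine Fintype.sum_eq_single i fun j hji => ?_
    by_cases hj : x j = 0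
    · rw [hj, zero_mul]
    · rw [hcT j (hxT j hj) hji, map_zero, mul_zero]
  have horth : ∑ j, x j * σ (c j) = 0 := by simpa only [hσ] using hx c hc
  rw [horth, hci, map_one, mul_one] at hsum
  exact hi hsum.symm

/- The coordinate functionals at the points of `T` are linearly dependent on `C`; the `q`-th powers
of the coefficients of a dependency form a word of the Hermitian dual. -/
theorem exists_mem_hermDual_of_finrank_lt (hσ : ∀ x, σ x = x ^ q) {T : Finset (Fin n)}
    (hT : Module.finrank F C < #T) :
    ∃ x ∈ hermDual q C, x ≠ 0 ∧ ∀ i ∉ T, x i = 0 := by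
  classical
  let coord : Fin n → Module.Dual F C := fun i => LinearMap.proj i ∘ₗ C.subtype
  have hdep : ¬LinearIndepOn F coord (T : Set (Fin n)) := fun h => by
    have hle : #T ≤ Module.finrank F (Module.Dual F C) := by
      simpa using LinearIndependent.fintype_card_le_finrank h
    exact hT.not_ge (hle.trans_eq Subspace.dual_finrank_eq)
  obtain ⟨y, hy, i, hi, hyi⟩ := not_linearIndepOn_finset_iff.1 hdep
  refine ⟨fun j => if j ∈ T then σ (y j) else 0, fun c hc => ?_, ?_, fun j hj => if_neg hj⟩
  · have hyc : ∑ j ∈ T, y j * c j = 0 := by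
      simpa [coord] using LinearMap.congr_fun hy ⟨c, hc⟩
    simp only [← hσ, ite_mul, zero_mul, sum_ite_mem, univ_inter, ← map_mul, ← map_sum, hyc,
      map_zero]
  · exact Function.ne_iff.2 ⟨i, by simpa [hi] using hyi⟩

theorem IsMDS.minDistEq_hermDual (hC : IsMDS C K) (hσ : ∀ x, σ x = x ^ q) (hKn : K < n) :
    MinDistEq (hermDual q C) (K + 1) := by
  have hlower : ∀ x ∈ hermDual q C, x ≠ 0 → K + 1 ≤ {i | x i ≠ 0}.ncard := fun x hx hx0 =>
    hC.lt_ncard_ne_zero_of_mem_hermDual hσ hKn.le hx hx0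
  obtain ⟨T, -, hT⟩ :=
    exists_subset_card_eq (s := (univ : Finset (Fin n))) (n := K + 1) (by simpa using hKn)
  obtain ⟨x, hx, hx0, hxT⟩ := exists_mem_hermDual_of_finrank_lt (C := C) hσ
    (by rw [hC.finrank_eq, hT]; exact K.lt_succ_self)
  have hsub : {i | x i ≠ 0} ⊆ (T : Set (Fin n)) := fun i hi => by
    by_contra hiT
    exact hi (hxT i hiT)
  have hupper := Set.ncard_le_ncard hsub
  rw [Set.ncard_coe_finset, hT] at hupper
  exact ⟨hlower, x, hx, hx0, hupper.antisymm (hlower x hx hx0)⟩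

/-- There is a Hermitian self-orthogonal `[n, K]` MDS code over `F` whose Hermitian dual has
minimum distance `K + 1`: the common shape of the codes to be constructed. -/
def ExistsHermSelfOrthMDS (q : ℕ) (F : Type*) [Field F] (n K : ℕ) : Prop :=
  ∃ C : Submodule F (Fin n → F), Module.finrank F C = K ∧ IsHermSelfOrth q C ∧
    MinDistEq C (n - K + 1) ∧ MinDistEq (hermDual q C) (K + 1)

theorem IsMDS.existsHermSelfOrthMDS (hC : IsMDS C K) (hσ : ∀ x, σ x = x ^ q) (hK : 0 < K)
    (hKn : K < n) (horth : IsHermSelfOrth q C) : ExistsHermSelfOrthMDS q F n K :=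
  ⟨C, hC.finrank_eq, horth, hC.minDistEq hK, hC.minDistEq_hermDual hσ hKn⟩

theorem isMDS_map_degreeLT {ι : Type*} [Fintype ι] {K : ℕ} (φ : F[X] →ₗ[F] (ι → F))
    (hK : K ≤ Fintype.card ι)
    (hφ : ∀ f ∈ degreeLT F K, ∀ T : Finset ι, #T = K → (∀ i ∈ T, φ f i = 0) → f = 0) :
    IsMDS ((degreeLT F K).map φ) K where
  finrank_eq := by
    obtain ⟨T, -, hT⟩ := exists_subset_card_eq (s := (univ : Finset ι)) hK
    have hinj : Function.Injective (φ.domRestrict (degreeLT F K)) := by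
      rw [← LinearMap.ker_eq_bot, LinearMap.ker_eq_bot']
      intro f hf
      exact Subtype.ext <| hφ f f.2 T hT fun i _ => congrFun hf i
    rw [← LinearMap.range_domRestrict, LinearMap.finrank_range_of_inj hinj,
      (degreeLTEquiv F K).finrank_eq, Module.finrank_fin_fun]
  eq_zero_of_eqOn_zero := by
    rintro _ ⟨f, hf, rfl⟩ T hT hfT
    rw [hφ f hf T hT hfT, map_zero]

end MDS

section ReedSolomon

variable {F : Type*} [Field F]

/-- The evaluation map of generalized Reed–Solomon codes with multipliers `v` and nodes `a`; the
code of dimension `K` is the image of `degreeLT F K`. -/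
noncomputable def grsEval {ι : Type*} (v a : ι → F) : F[X] →ₗ[F] (ι → F) :=
  LinearMap.pi fun l => v l • leval (a l)

/-- The evaluation map of extended generalized Reed–Solomon codes of dimension `K + 1`. The
additional coordinate, with index `0` and multiplier `w`, is the evaluation at infinity: it returns
the coefficient of degree `K`. -/
noncomputable def extGrsEval {N : ℕ} (w : F) (v a : Fin N → F) (K : ℕ) :
    F[X] →ₗ[F] (Fin (N + 1) → F) :=
  LinearMap.pi (Fin.cons (w • lcoeff F K) fun l => v l • leval (a l))

@[simp]
theorem grsEval_apply {ι : Type*} (v a : ι → F) (f : F[X]) (l : ι) :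
    grsEval v a f l = v l * f.eval (a l) := rfl

@[simp]
theorem extGrsEval_apply_zero {N : ℕ} (w : F) (v a : Fin N → F) (K : ℕ) (f : F[X]) :
    extGrsEval w v a K f 0 = w * f.coeff K := rfl

@[simp]
theorem extGrsEval_apply_succ {N : ℕ} (w : F) (v a : Fin N → F) (K : ℕ) (f : F[X]) (l : Fin N) :
    extGrsEval w v a K f l.succ = grsEval v a f l := rfl

theorem eq_zero_of_grsEval_eq_zero {ι : Type*} {v a : ι → F} (hv : ∀ l, v l ≠ 0)
    (ha : Function.Injective a) {f : F[X]} {T : Finset ι} (hf : f.degree < #T)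
    (hfT : ∀ l ∈ T, grsEval v a f l = 0) : f = 0 :=
  eq_zero_of_degree_lt_of_eval_index_eq_zero T ha.injOn hf fun l hl => by
    simpa [hv l] using hfT l hl

theorem isMDS_grs {ι : Type*} [Fintype ι] {v a : ι → F} (hv : ∀ l, v l ≠ 0)
    (ha : Function.Injective a) {K : ℕ} (hK : K ≤ Fintype.card ι) :
    IsMDS ((degreeLT F K).map (grsEval v a)) K :=
  isMDS_map_degreeLT _ hK fun _ hf _ hT =>
    eq_zero_of_grsEval_eq_zero hv ha (hT.symm ▸ mem_degreeLT.1 hf)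

theorem isMDS_extGrs {N : ℕ} {w : F} (hw : w ≠ 0) {v a : Fin N → F} (hv : ∀ l, v l ≠ 0)
    (ha : Function.Injective a) {K : ℕ} (hK : K ≤ N) :
    IsMDS ((degreeLT F (K + 1)).map (extGrsEval w v a K)) (K + 1) := by
  refine isMDS_map_degreeLT _ (by simpa using hK) fun f hf T hT hfT => ?_
  rw [mem_degreeLT] at hf
  have hcard := Fin.card_filter_univ_succ (· ∈ T)
  rw [filter_univ_mem, hT] at hcard
  refine eq_zero_of_grsEval_eq_zero hv ha (T := {l | l.succ ∈ T}) ?_ fun l hl =>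
    hfT l.succ (mem_filter.1 hl).2
  split_ifs at hcard with h0
  · have hcoeff : f.coeff K = 0 := by simpa [hw] using hfT 0 h0
    rw [← Nat.succ_injective hcard]
    rw [degree_lt_iff_coeff_zero] at hf ⊢
    intro m hm
    rcases hm.eq_or_lt with rfl | hlt
    · exact hcoeff
    · exact hf m hlt
  · rwa [← hcard]

theorem sum_grsEval_mul_grsEval_pow {ι : Type*} [Fintype ι] (v a : ι → F) (q i j : ℕ) :
    ∑ l, grsEval v a (X ^ i) l * grsEval v a (X ^ j) l ^ q =
      ∑ l, v l ^ (q + 1) * a l ^ (i + q * j) := by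
  refine sum_congr rfl fun l _ => ?_
  simp only [grsEval_apply, eval_pow, eval_X]
  ring

end ReedSolomon

section FiniteField

variable {F : Type*} [Field F] [Fintype F]

theorem exists_ringHom_eq_pow {q : ℕ} (hF : Fintype.card F = q ^ 2) :
    ∃ σ : F →+* F, ∀ x, σ x = x ^ q := by
  obtain ⟨p, hp⟩ := CharP.exists F
  obtain ⟨m, hpp, hm⟩ := FiniteField.card F p
  have hdvd : q ∣ p ^ (m : ℕ) := by
    rw [← hm, hF]
    exact dvd_pow_self q two_ne_zero
  obtain ⟨s, -, rfl⟩ := (Nat.dvd_prime_pow hpp).1 hdvd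
  have := Fact.mk hpp
  exact ⟨iterateFrobenius F p s, fun x => iterateFrobenius_def p s x⟩

theorem one_lt_of_card_eq_sq {q : ℕ} (hF : Fintype.card F = q ^ 2) : 1 < q :=
  (one_lt_pow_iff two_ne_zero).1 (hF ▸ Fintype.one_lt_card)

theorem splits_of_dvd_X_pow_card_sub_X {f : F[X]} (hf : f ∣ X ^ Fintype.card F - X) :
    f.Splits := by
  have hsplits : (X ^ Fintype.card F - X : F[X]).Splits := by
    rw [splits_iff_card_roots, FiniteField.roots_X_pow_card_sub_X,
      FiniteField.X_pow_card_sub_X_natDegree_eq F Fintype.one_lt_card]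
    rfl
  exact hsplits.of_dvd (FiniteField.X_pow_card_sub_X_ne_zero F Fintype.one_lt_card) hf

theorem nodup_roots_of_dvd_X_pow_card_sub_X {f : F[X]} (hf : f ∣ X ^ Fintype.card F - X) :
    f.roots.Nodup := by
  have hle := roots.le_of_dvd (FiniteField.X_pow_card_sub_X_ne_zero F Fintype.one_lt_card) hf
  rw [FiniteField.roots_X_pow_card_sub_X] at hle
  exact Multiset.nodup_of_le hle univ.nodup

theorem X_mul_dvd_X_pow_sub_X {R : Type*} [CommRing R] {m c : ℕ} (hc : 0 < c) (hm : m ∣ c - 1)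
    {f : R[X]} (hf : f ∣ X ^ m - 1) : X * f ∣ X ^ c - X := by
  have hfactor : (X ^ c - X : R[X]) = X * (X ^ (c - 1) - 1) := by
    rw [mul_sub_one, mul_pow_sub_one hc.ne']
  rw [hfactor]
  exact mul_dvd_mul_left X (hf.trans (dvd_pow_sub_one_of_dvd hm))

theorem exists_pow_succ_eq {q : ℕ} (hF : Fintype.card F = q ^ 2) {s : F} (hs : s ^ q = s) :
    ∃ v : F, v ^ (q + 1) = s := by
  obtain rfl | hs0 := eq_or_ne s 0
  · exact ⟨0, zero_pow q.succ_ne_zero⟩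
  have hq := one_lt_of_card_eq_sq hF
  have hs1 : s ^ (q - 1) = 1 := by
    rw [← pow_sub_one_mul (by omega) s] at hs
    exact mul_eq_right₀ hs0 |>.1 hs
  have hdvd : X ^ (q + 1) - C s ∣ (X ^ (q ^ 2 - 1) - 1 : F[X]) := by
    have h := sub_dvd_pow_sub_pow (X ^ (q + 1)) (C s) (q - 1)
    rwa [← pow_mul, ← C_pow, hs1, C_1, ← Nat.sq_sub_sq, one_pow] at h
  have hsplits : (X ^ (q + 1) - C s).Splits := splits_of_dvd_X_pow_card_sub_X <|
    dvd_of_mul_left_dvd (X_mul_dvd_X_pow_sub_X Fintype.card_pos (by rw [hF]) hdvd)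
  obtain ⟨v, hv⟩ := hsplits.exists_eval_eq_zero
    (by rw [degree_X_pow_sub_C q.succ_pos]; exact_mod_cast q.succ_ne_zero)
  exact ⟨v, by simpa [sub_eq_zero] using hv⟩

end FiniteField

section Nodes

variable {F : Type*} [Field F]

/-- Nodes of Hermitian self-orthogonal Reed–Solomon codes over the field with `q ^ 2` elements:
their barycentric weights lie in the subfield with `q` elements, hence are norms. -/
structure IsHermNodes (q : ℕ) {N : ℕ} (a : Fin N → F) : Prop where
  injective : Function.Injective a
  nodalWeight_pow : ∀ l, Lagrange.nodalWeight univ a l ^ q = Lagrange.nodalWeight univ a l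

/-- The power sum of exponent `e` of the nodes `a`, weighted by their barycentric weights. It is
the Hermitian product of two monomial codewords when `e` is of the form `i + q * j`. -/
def nodalPowerSum {N : ℕ} (a : Fin N → F) (e : ℕ) : F :=
  ∑ l, Lagrange.nodalWeight univ a l * a l ^ e

/- Both sides are the coefficient of `X ^ (N - 1)` in the interpolation polynomial of `X ^ e`. -/
theorem nodalPowerSum_eq_ite {N : ℕ} {a : Fin N → F} (ha : Function.Injective a) {e : ℕ}
    (he : e < N) : nodalPowerSum a e = if e + 1 = N then 1 else 0 := by
  have hcoeff := Lagrange.coeff_eq_sum (s := univ) (v := a) ha.injOn (P := (X ^ e : F[X]))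
    (by simpa using he)
  simp only [card_univ, Fintype.card_fin, coeff_X_pow, eval_pow, eval_X] at hcoeff
  have hiff : e + 1 = N ↔ N - 1 = e := by omega
  simp only [nodalPowerSum, Lagrange.nodalWeight, prod_inv_distrib, hiff, hcoeff, div_eq_mul_inv,
    mul_comm]

theorem nodalPowerSum_eq_zero {N : ℕ} {a : Fin N → F} (ha : Function.Injective a) {e : ℕ}
    (he : e + 1 < N) : nodalPowerSum a e = 0 := by
  rw [nodalPowerSum_eq_ite ha (by omega), if_neg he.ne]

namespace IsHermNodes

variable [Fintype F] {q N : ℕ} {a : Fin N → F}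

theorem nodalPowerSum_pow (ha : IsHermNodes q a) (hF : Fintype.card F = q ^ 2) (i j : ℕ) :
    nodalPowerSum a (i + q * j) ^ q = nodalPowerSum a (j + q * i) := by
  obtain ⟨σ, hσ⟩ := exists_ringHom_eq_pow hF
  simp only [nodalPowerSum]
  rw [← hσ, map_sum]
  refine sum_congr rfl fun l _ => ?_
  have hpow : (a l ^ (i + q * j)) ^ q = a l ^ (j + q * i) :=
    calc (a l ^ (i + q * j)) ^ q = (a l ^ q ^ 2) ^ j * a l ^ (q * i) := by ring
      _ = a l ^ (j + q * i) := by rw [← hF, FiniteField.pow_card, pow_add]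
  rw [map_mul, hσ, hσ, ha.nodalWeight_pow, hpow]

/- The bound on `K` makes the exponents with `j < K` smaller than `N - 1`; conjugation swaps `i`
and `j`, which leaves only `i = j = K` undecided. -/
theorem nodalPowerSum_add_mul_eq_zero (ha : IsHermNodes q a) (hF : Fintype.card F = q ^ 2)
    {K i j : ℕ} (hK : K * (q + 1) + 1 < N + q) (hi : i ≤ K) (hj : j ≤ K) (hij : i < K ∨ j < K) :
    nodalPowerSum a (i + q * j) = 0 := by
  have hsmall : ∀ i ≤ K, ∀ j < K, nodalPowerSum a (i + q * j) = 0 := by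
    intro i hi j hj
    have := Nat.mul_le_mul_left q (Nat.succ_le_of_lt hj)
    rw [Nat.mul_succ] at this
    exact nodalPowerSum_eq_zero ha.injective (by linarith)
  rcases hij with hi' | hj'
  · have hq := one_lt_of_card_eq_sq hF
    rw [← pow_eq_zero_iff (n := q) (by omega), ha.nodalPowerSum_pow hF, hsmall j hj i hi']
  · exact hsmall i hi j hj'

theorem exists_multipliers (ha : IsHermNodes q a) (hF : Fintype.card F = q ^ 2) :
    ∃ v : Fin N → F, (∀ l, v l ≠ 0) ∧ ∀ i j,
      ∑ l, grsEval v a (X ^ i) l * grsEval v a (X ^ j) l ^ q = nodalPowerSum a (i + q * j) := by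
  choose v hv using fun l => exists_pow_succ_eq hF (ha.nodalWeight_pow l)
  refine ⟨v, fun l hl => ?_, fun i j => ?_⟩
  · refine Lagrange.nodalWeight_ne_zero ha.injective.injOn (mem_univ l) ?_
    rw [← hv l, hl, zero_pow q.succ_ne_zero]
  · simp only [sum_grsEval_mul_grsEval_pow, hv, nodalPowerSum]

theorem existsHermSelfOrthMDS_grs (ha : IsHermNodes q a) (hF : Fintype.card F = q ^ 2) {K : ℕ}
    (hK : 0 < K) (hKN : K < N)
    (hS : ∀ i < K, ∀ j < K, nodalPowerSum a (i + q * j) = 0) :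
    ExistsHermSelfOrthMDS q F N K := by
  obtain ⟨σ, hσ⟩ := exists_ringHom_eq_pow hF
  obtain ⟨v, hv, hsum⟩ := ha.exists_multipliers hF
  refine (isMDS_grs hv ha.injective (by simpa using hKN.le)).existsHermSelfOrthMDS hσ hK hKN
    (isHermSelfOrth_map_degreeLT hσ _ ?_)
  simpa only [hsum] using hS

theorem existsHermSelfOrthMDS_extGrs (ha : IsHermNodes q a) (hF : Fintype.card F = q ^ 2)
    {K : ℕ} (hKN : K < N)
    (hS : ∀ i ≤ K, ∀ j ≤ K, i < K ∨ j < K → nodalPowerSum a (i + q * j) = 0)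
    (hS0 : nodalPowerSum a (K + q * K) ≠ 0) :
    ExistsHermSelfOrthMDS q F (N + 1) (K + 1) := by
  obtain ⟨σ, hσ⟩ := exists_ringHom_eq_pow hF
  obtain ⟨v, hv, hsum⟩ := ha.exists_multipliers hF
  obtain ⟨w, hw⟩ : ∃ w, w ^ (q + 1) = -nodalPowerSum a (K + q * K) := by
    refine exists_pow_succ_eq hF ?_
    rw [← hσ, map_neg, hσ, ha.nodalPowerSum_pow hF]
  have hw0 : w ≠ 0 := by
    rintro rfl
    simp [hS0] at hw
  refine (isMDS_extGrs hw0 hv ha.injective hKN.le).existsHermSelfOrthMDS hσ K.succ_pos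
    (Nat.succ_lt_succ hKN) (isHermSelfOrth_map_degreeLT hσ _ fun i hi j hj => ?_)
  simp only [Fin.sum_univ_succ, extGrsEval_apply_zero, extGrsEval_apply_succ, hsum, coeff_X_pow]
  obtain ⟨rfl, rfl⟩ | hij : (K = i ∧ i = j) ∨ (i < K ∨ j < K) := by omega
  · rw [if_pos rfl, mul_one, ← pow_succ', hw, neg_add_cancel]
  · rw [hS i (by omega) j (by omega) hij, add_zero]
    have hq := one_lt_of_card_eq_sq hF
    rcases hij with hi' | hj'
    · rw [if_neg hi'.ne', mul_zero, zero_mul]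
    · rw [if_neg hj'.ne', mul_zero, zero_pow (by omega), mul_zero]

theorem existsHermSelfOrthMDS (ha : IsHermNodes q a) (hF : Fintype.card F = q ^ 2) {K : ℕ}
    (hK : 0 < K) (hKN : K * (q + 1) < N + q) : ExistsHermSelfOrthMDS q F N K := by
  refine ha.existsHermSelfOrthMDS_grs hF hK (by nlinarith) fun i hi j hj => ?_
  have := Nat.mul_le_mul_left q (Nat.succ_le_of_lt hj)
  rw [Nat.mul_succ] at this
  exact nodalPowerSum_eq_zero ha.injective (by linarith)

theorem existsHermSelfOrthMDS_succ (ha : IsHermNodes q a) (hF : Fintype.card F = q ^ 2) {K : ℕ}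
    (hK : 0 < K) (hKN : K * (q + 1) + 1 < N + q) (htop : nodalPowerSum a (K + q * K) = 0) :
    ExistsHermSelfOrthMDS q F N (K + 1) := by
  refine ha.existsHermSelfOrthMDS_grs hF K.succ_pos (by nlinarith) fun i hi j hj => ?_
  obtain ⟨rfl, rfl⟩ | hij : (K = i ∧ i = j) ∨ (i < K ∨ j < K) := by omega
  · exact htop
  · exact ha.nodalPowerSum_add_mul_eq_zero hF hKN (by omega) (by omega) hij

theorem existsHermSelfOrthMDS_succ_succ (ha : IsHermNodes q a) (hF : Fintype.card F = q ^ 2)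
    {K : ℕ} (hK : 0 < K) (hKN : K * (q + 1) + 1 < N + q)
    (htop : nodalPowerSum a (K + q * K) ≠ 0) : ExistsHermSelfOrthMDS q F (N + 1) (K + 1) :=
  ha.existsHermSelfOrthMDS_extGrs hF (by nlinarith)
    (fun _ hi _ hj => ha.nodalPowerSum_add_mul_eq_zero hF hKN hi hj) htop

end IsHermNodes

end Nodes

section NodeConstruction

theorem div_gcd_dvd_pred {n q : ℕ} (h : n ∣ q ^ 2 - 1) : n / n.gcd (q + 1) ∣ q - 1 := by
  rw [← one_pow 2, Nat.sq_sub_sq, ← Nat.dvd_gcd_mul_iff_dvd_mul] at h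
  exact (Nat.div_dvd_iff_dvd_mul (n.gcd_dvd_left _) (n.gcd_pos_of_pos_right q.succ_pos)).2 h

theorem mul_div_div_gcd_dvd {n q : ℕ} (h : n ∣ q ^ 2 - 1) :
    n * ((q - 1) / (n / n.gcd (q + 1))) ∣ q ^ 2 - 1 := by
  have hprod : n * ((q - 1) / (n / n.gcd (q + 1))) = n.gcd (q + 1) * (q - 1) := by
    nth_rw 1 [← Nat.mul_div_cancel' (n.gcd_dvd_left (q + 1))]
    rw [mul_assoc, Nat.mul_div_cancel' (div_gcd_dvd_pred h)]
  rw [hprod, ← one_pow 2, Nat.sq_sub_sq]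
  exact Nat.mul_dvd_mul_right (n.gcd_dvd_right (q + 1)) (q - 1)

theorem pow_eq_self_of_pow_eq_one {M : Type*} [Monoid M] {x : M} {q r : ℕ} (hq : 0 < q)
    (hr : r ∣ q - 1) (hx : x ^ r = 1) : x ^ q = x := by
  have hpow : x ^ (q - 1) = 1 :=
    orderOf_dvd_iff_pow_eq_one.1 ((orderOf_dvd_of_pow_eq_one hx).trans hr)
  rw [← mul_pow_sub_one hq.ne' x, hpow, mul_one]

variable {F : Type*} [Field F]

theorem exists_injective_nodal_eq {P : F[X]} (hP : P.Monic) (hsplits : P.Splits)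
    (hnodup : P.roots.Nodup) {N : ℕ} (hN : P.natDegree = N) :
    ∃ a : Fin N → F, Function.Injective a ∧ Lagrange.nodal univ a = P := by
  classical
  have hcard : #P.roots.toFinset = N := by
    rw [Multiset.toFinset_card_of_nodup hnodup, ← hsplits.natDegree_eq_card_roots, hN]
  let e := (P.roots.toFinset.equivFinOfCardEq hcard).symm
  refine ⟨fun l => e l, Subtype.val_injective.comp e.injective, ?_⟩
  calc ∏ l, (X - C (e l : F)) = ∏ x : P.roots.toFinset, (X - C (x : F)) :=
        e.prod_comp fun x => X - C (x : F)
    _ = ∏ x ∈ P.roots.toFinset, (X - C x) := prod_coe_sort P.roots.toFinset fun x => X - C x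
    _ = (P.roots.map fun x => X - C x).prod := by
        rw [Finset.prod, Multiset.toFinset_val, hnodup.dedup]
    _ = P := (hsplits.eq_prod_roots_of_monic hP).symm

theorem exists_monic_dvd_of_splits {P : F[X]} (hP : P ≠ 0) (hsplits : P.Splits) {m : ℕ}
    (hm : m ≤ P.natDegree) : ∃ Q : F[X], Q.Monic ∧ Q.natDegree = m ∧ Q ∣ P := by
  obtain ⟨s, hs⟩ : ∃ s, s ∈ P.roots.powersetCard m := by
    rw [← Multiset.card_pos_iff_exists_mem, Multiset.card_powersetCard,
      ← hsplits.natDegree_eq_card_roots]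
    exact Nat.choose_pos hm
  rw [Multiset.mem_powersetCard] at hs
  refine ⟨(s.map fun x => X - C x).prod, monic_multisetProd_X_sub_C s, ?_,
    (Multiset.prod_X_sub_C_dvd_iff_le_roots hP s).2 hs.1⟩
  rw [natDegree_multiset_prod_X_sub_C_eq_card, hs.2]

theorem map_eq_self_of_splits {σ : F →+* F} {Q : F[X]} (hQ : Q.Monic) (hsplits : Q.Splits)
    (hσ : ∀ x ∈ Q.roots, σ x = x) : Q.map σ = Q := by
  have hroots : (Q.map σ).roots = Q.roots := by
    rw [hsplits.roots_map, Multiset.map_congr rfl hσ, Multiset.map_id']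
  rw [(hsplits.map σ).eq_prod_roots_of_monic (hQ.map σ), hroots,
    ← hsplits.eq_prod_roots_of_monic hQ]

theorem derivative_X_mul_expand {R : Type*} [CommSemiring R] {n : ℕ} (hn : 0 < n) (Q : R[X]) :
    derivative (X * expand R n Q) = expand R n (Q + (n : R[X]) * X * derivative Q) := by
  rw [derivative_mul, derivative_X, derivative_expand]
  simp only [map_add, map_mul, map_natCast, expand_X]
  rw [← mul_pow_sub_one hn.ne' X]
  ring

theorem isHermNodes_of_nodal_eq {q n N : ℕ} {σ : F →+* F} (hσ : ∀ x, σ x = x ^ q) (hn : 0 < n)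
    {a : Fin N → F} (ha : Function.Injective a) {Q : F[X]} (hQ : Q.map σ = Q)
    (hnodal : Lagrange.nodal univ a = X * expand F n Q) (hfixed : ∀ l, (a l ^ n) ^ q = a l ^ n) :
    IsHermNodes q a where
  injective := ha
  nodalWeight_pow l := by
    set D := Q + (n : F[X]) * X * derivative Q with hD
    have hDσ : D.map σ = D := by
      simp only [hD, Polynomial.map_add, Polynomial.map_mul, Polynomial.map_natCast, map_X,
        ← derivative_map, hQ]
    have heval : σ (D.eval (a l ^ n)) = D.eval (a l ^ n) := by
      rw [← eval_map_apply, hDσ, hσ, hfixed]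
    rw [Lagrange.nodalWeight_eq_eval_derivative_nodal (mem_univ l), hnodal,
      derivative_X_mul_expand hn, expand_eval, ← hσ, map_inv₀, heval]

variable [Fintype F] {q : ℕ}

theorem exists_monic_dvd_X_pow_sub_one (hF : Fintype.card F = q ^ 2) {σ : F →+* F}
    (hσ : ∀ x, σ x = x ^ q) {m r : ℕ} (hr : r ∣ q - 1) (hm : m ≤ r) :
    ∃ Q : F[X], Q.Monic ∧ Q.natDegree = m ∧ Q ∣ X ^ r - 1 ∧ Q.map σ = Q := by
  have hq := one_lt_of_card_eq_sq hF
  have hr0 : 0 < r := Nat.pos_of_dvd_of_pos hr (by omega)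
  have hr2 : r ∣ Fintype.card F - 1 := by
    rw [hF, ← one_pow 2, Nat.sq_sub_sq]
    exact hr.mul_left (q + 1)
  have hsplits : ∀ {f : F[X]}, f ∣ X ^ r - 1 → f.Splits := fun hf =>
    splits_of_dvd_X_pow_card_sub_X <|
      dvd_of_mul_left_dvd (X_mul_dvd_X_pow_sub_X Fintype.card_pos hr2 hf)
  have hX0 : (X ^ r - 1 : F[X]) ≠ 0 := X_pow_sub_C_ne_zero hr0 1
  have hXr : (X ^ r - 1 : F[X]).natDegree = r := natDegree_X_pow_sub_C
  obtain ⟨Q, hQ, hQm, hQr⟩ := exists_monic_dvd_of_splits hX0 (hsplits dvd_rfl) (hXr.symm ▸ hm)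
  refine ⟨Q, hQ, hQm, hQr, map_eq_self_of_splits hQ (hsplits hQr) fun x hx => ?_⟩
  have hxr : x ^ r = 1 := by
    simpa [sub_eq_zero] using (isRoot_of_mem_roots hx).dvd hQr
  rw [hσ, pow_eq_self_of_pow_eq_one (by omega) hr hxr]

theorem exists_isHermNodes (hF : Fintype.card F = q ^ 2) {n m : ℕ} (hn : n ∣ q ^ 2 - 1)
    (hm : m ≤ (q - 1) / (n / n.gcd (q + 1))) :
    ∃ a : Fin (m * n + 1) → F, IsHermNodes q a := by
  obtain ⟨σ, hσ⟩ := exists_ringHom_eq_pow hF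
  have hq := one_lt_of_card_eq_sq hF
  have hn0 : 0 < n := Nat.pos_of_dvd_of_pos hn (Nat.sub_pos_of_lt (Nat.one_lt_pow two_ne_zero hq))
  have hr : (q - 1) / (n / n.gcd (q + 1)) ∣ q - 1 := Nat.div_dvd_of_dvd (div_gcd_dvd_pred hn)
  obtain ⟨Q, hQ, hQm, hQr, hQσ⟩ := exists_monic_dvd_X_pow_sub_one hF hσ hr hm
  set r := (q - 1) / (n / n.gcd (q + 1))
  have hexpand : expand F n Q ∣ X ^ (n * r) - 1 := by
    simpa [pow_mul] using map_dvd (expand F n) hQr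
  have hP : X * expand F n Q ∣ X ^ Fintype.card F - X :=
    X_mul_dvd_X_pow_sub_X Fintype.card_pos (hF ▸ mul_div_div_gcd_dvd hn) hexpand
  have hdeg : (X * expand F n Q).natDegree = m * n + 1 := by
    rw [natDegree_X_mul (hQ.expand hn0).ne_zero, natDegree_expand, hQm]
  obtain ⟨a, ha, hnodal⟩ := exists_injective_nodal_eq (monic_X.mul (hQ.expand hn0))
    (splits_of_dvd_X_pow_card_sub_X hP) (nodup_roots_of_dvd_X_pow_card_sub_X hP) hdeg
  refine ⟨a, isHermNodes_of_nodal_eq hσ hn0 ha hQσ hnodal fun l => ?_⟩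
  have hroot : a l * Q.eval (a l ^ n) = 0 := by
    have h := Lagrange.eval_nodal_at_node (v := a) (mem_univ l)
    rwa [hnodal, eval_mul, eval_X, expand_eval] at h
  rcases mul_eq_zero.1 hroot with hl | hl
  · rw [hl, zero_pow hn0.ne', zero_pow (by omega)]
  · have hlr : (a l ^ n) ^ r = 1 := by
      simpa [sub_eq_zero] using IsRoot.dvd (x := a l ^ n) hl hQr
    exact pow_eq_self_of_pow_eq_one (by omega) hr hlr

end NodeConstruction

theorem stmt14_general {q n m N k : ℕ} {F : Type*} [Field F] [Fintype F]
    (hF : Fintype.card F = q ^ 2) (hn : n ∣ q ^ 2 - 1) (hm : m ≤ (q - 1) / (n / n.gcd (q + 1)))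
    (hN : N = m * n + 1) (hk1 : 1 ≤ k) (hk2 : k ≤ (N + q - 1) / (q + 1)) :
    ExistsHermSelfOrthMDS q F N k ∧
    (k * (q + 1) = N - 1 → ExistsHermSelfOrthMDS q F (N + 1) (k + 1)) ∧
    (N - 1 + q ≠ k * (q + 1) →
      ∃ n', (n' = N ∨ n' = N + 1) ∧ ExistsHermSelfOrthMDS q F n' (k + 1)) := by
  obtain ⟨a, ha⟩ : ∃ a : Fin N → F, IsHermNodes q a := hN ▸ exists_isHermNodes hF hn hm
  have hq := one_lt_of_card_eq_sq hF
  rw [Nat.le_div_iff_mul_le (by omega)] at hk2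
  refine ⟨ha.existsHermSelfOrthMDS hF hk1 (by omega), fun hk => ?_, fun hk => ?_⟩
  · have htop : nodalPowerSum a (k + q * k) = 1 := by
      have hexp : k + q * k + 1 = N := by linarith [Nat.sub_add_cancel (show 1 ≤ N by omega)]
      rw [nodalPowerSum_eq_ite ha.injective (by omega), if_pos hexp]
    exact ha.existsHermSelfOrthMDS_succ_succ hF hk1 (by omega) (htop ▸ one_ne_zero)
  · obtain htop | htop := eq_or_ne (nodalPowerSum a (k + q * k)) 0
    · exact ⟨N, .inl rfl, ha.existsHermSelfOrthMDS_succ hF hk1 (by omega) htop⟩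
    · exact ⟨N + 1, .inr rfl, ha.existsHermSelfOrthMDS_succ_succ hF hk1 (by omega) htop⟩

/-- MDS quantum theorem (classical form) for lengths `N = (t+1)n+1` with `n ∣ q²−1`,
`n₂ = n/gcd(n,q+1)`, `1 ≤ t ≤ (q−1)/n₂ − 1`, `1 ≤ k ≤ ⌊(N+q−1)/(q+1)⌋`:
(a) an MDS Hermitian self-orthogonal `[N,k]` code with dual distance `k+1` exists;
(b) if `k(q+1) = N−1`, an MDS Hermitian self-orthogonal `[N+1,k+1]` code with dual
distance `k+2` exists; (c) if `N−1+q ≠ k(q+1) ≠ N−1`, such a code of length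
`n' ∈ {N, N+1}` exists. -/
theorem stmt14 (q n : ℕ) (hq : IsPrimePow q) (hn : 0 < n)
    (hdvd : n ∣ q ^ 2 - 1)
    (t : ℕ) (ht1 : 1 ≤ t) (ht2 : t ≤ (q - 1) / (n / Nat.gcd n (q + 1)) - 1)
    (N : ℕ) (hN : N = (t + 1) * n + 1)
    (k : ℕ) (hk1 : 1 ≤ k) (hk2 : k ≤ (N + q - 1) / (q + 1))
    (F : Type*) [Field F] [Fintype F] (hF : Fintype.card F = q ^ 2) :
    (∃ C : Submodule F (Fin N → F),
      Module.finrank F C = k ∧ IsHermSelfOrth q C ∧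
      MinDistEq C (N - k + 1) ∧ MinDistEq (hermDual q C) (k + 1)) ∧
    (k * (q + 1) = N - 1 →
      ∃ C : Submodule F (Fin (N + 1) → F),
        Module.finrank F C = k + 1 ∧ IsHermSelfOrth q C ∧
        MinDistEq C ((N + 1) - (k + 1) + 1) ∧
        MinDistEq (hermDual q C) (k + 2)) ∧
    (N - 1 + q ≠ k * (q + 1) → k * (q + 1) ≠ N - 1 →
      ∃ n' : ℕ, (n' = N ∨ n' = N + 1) ∧
        ∃ C : Submodule F (Fin n' → F),
          Module.finrank F C = k + 1 ∧ IsHermSelfOrth q C ∧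
          MinDistEq C (n' - (k + 1) + 1) ∧
          MinDistEq (hermDual q C) (k + 2)) := by
  obtain ⟨ha, hb, hc⟩ := stmt14_general (m := t + 1) hF hdvd (by omega) hN hk1 hk2
  exact ⟨ha, hb, fun h _ => hc h⟩
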